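/- arXiv:2507.14070 — 3 statements merged into one kernel-verified Lean document; each statement's English description precedes it below -/
import Mathlib

section
/- Let b, t, γ be positive integers with t ≥ 2 and 3t ≤ b. Let F be a nonempty finite set and let f : Σ_2^b → F be a one-burst-t-deletion syndrome function. Then there exist σ_0, σ_1 ∈ F such that the code C ⊆ Σ_2^{bγ} consisting of all concatenations x_1 x_2 ⋯ x_γ with x_1 ∈ S^(0), and x_i ∈ S^(1) if the last bit of x_{i−1} equals 0 and x_i ∈ S^(0) otherwise (where S^(c) = {s ∈ Σ_2^b : f(s) = σ_c, s_1 = c, s_{t+1} ≠ s_{2t}, s_{b−t+1} = s_b}), is a segmented burst-of-t-deletions error-correcting code of size |C| ≥ (2^{b−3}/|F|)^γ. -/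
/-- The one-burst-`t`-deletion ball `B_t^D(x)`: all sequences obtained from `x` by
deleting `t` consecutive symbols. -/
def burstDelBall {q : ℕ} (t : ℕ) (x : List (Fin q)) : Set (List (Fin q)) :=
  {y | ∃ i, i + t ≤ x.length ∧ y = x.take i ++ x.drop (i + t)}

/-- The `i`-th (0-indexed) segment of length `b` of `x`. -/
def seg {q : ℕ} (b : ℕ) (x : List (Fin q)) (i : ℕ) : List (Fin q) :=
  (x.drop (i * b)).take b

/-- The segmented burst-deletion ball `B^D_{γ,t}(x)`: concatenations `z_1 ⋯ z_γ`
where each `z_i` is either the `i`-th segment of `x` or obtained from it by one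
burst of `t` deletions. -/
def segBall {q : ℕ} (b t γ : ℕ) (x : List (Fin q)) : Set (List (Fin q)) :=
  {y | ∃ z : Fin γ → List (Fin q),
      (∀ i : Fin γ, z i = seg b x i ∨ z i ∈ burstDelBall t (seg b x i)) ∧
      y = (List.ofFn z).flatten}

/-- `f` is a one-burst-`t`-deletion syndrome function on length-`b` sequences. -/
def IsSyndrome {q : ℕ} (b t : ℕ) {F : Type*} (f : List (Fin q) → F) : Prop :=
  ∀ u v : List (Fin q), u.length = b → v.length = b → u ≠ v → f u = f v →
    burstDelBall t u ∩ burstDelBall t v = ∅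

/-!
Decode the segments from left to right. If two codewords with a common received word begin with
segments `u` and `v` whose received versions have equal length, the syndrome forces `u = v`.
Otherwise one of them, say `v`, has been shortened to a word `z`. Then `z` is a prefix of `u`, so it
also arises from `u` by deleting the last `t` symbols, and the syndrome again forces `u = v`. But
now the last `t` symbols of `u`, of which the first and the last equal the last symbol `d` of `u`,
are the first `t` symbols of what is received after `z`. This is impossible: the segment sent after
`v` begins with a symbol other than `d` and has distinct symbols in positions `t + 1` and `2t`, so
neither it nor a word obtained from it by a burst of `t` deletions has `d` in both positions `1`
and `t`.

For the size, each of the three constraints on the symbols of a segment determines or excludes the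
value of one coordinate in terms of the others, which leaves `(q - 1) q ^ (b - 3)` words of each
class. The pigeonhole principle gives for each class a syndrome value attained by at least a
fraction `1 / |F|` of them, and this bound is the number of choices for every segment in turn.
-/

open Finset Function

section BurstDeletion

variable {q b t : ℕ} {s u v y z : List (Fin q)} {d : Fin q}

lemma length_add_of_mem_burstDelBall (h : y ∈ burstDelBall t s) : y.length + t = s.length := by
  obtain ⟨i, hi, rfl⟩ := h
  rw [List.length_append, List.length_take, List.length_drop]
  omega

lemma mem_burstDelBall_append (z w : List (Fin q)) : z ∈ burstDelBall w.length (z ++ w) :=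
  ⟨z.length, by simp, by simp⟩

lemma IsSyndrome.eq_of_mem_burstDelBall {F : Type*} {f : List (Fin q) → F}
    (hf : IsSyndrome b t f) (hu : u.length = b) (hv : v.length = b) (huv : f u = f v)
    (hzu : z ∈ burstDelBall t u) (hzv : z ∈ burstDelBall t v) : u = v := by
  by_contra hne
  exact Set.eq_empty_iff_forall_notMem.1 (hf u v hu hv hne huv) z ⟨hzu, hzv⟩

/-- `z` can be received when the segment `s` is sent: it is `s`, or `s` after one burst of `t`
deletions. -/
def IsReceived (t : ℕ) (z s : List (Fin q)) : Prop :=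
  z = s ∨ z ∈ burstDelBall t s

lemma IsReceived.length_le (h : IsReceived t z s) : s.length ≤ z.length + t := by
  rcases h with rfl | h
  · exact Nat.le_add_right _ _
  · exact (length_add_of_mem_burstDelBall h).ge

/-- The first and the `t`-th symbols of `r` are both `d`. This is the pattern that a segment of the
code with last symbol `d` shows in its last `t` positions, and that the segment sent after it never
shows in its first `t` positions. -/
def IsBracketed (t : ℕ) (d : Fin q) (r : List (Fin q)) : Prop :=
  r[0]? = some d ∧ r[t - 1]? = some d

lemma IsReceived.not_isBracketed (ht : 0 < t) (hz : IsReceived t z s) (h_first : s[0]? ≠ some d)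
    (h_mark : s[t]? ≠ s[2 * t - 1]?) : ¬ IsBracketed t d z := by
  rintro ⟨hz_first, hz_last⟩
  rcases hz with rfl | ⟨i, hi, rfl⟩
  · exact h_first hz_first
  rcases i.eq_zero_or_pos with rfl | hi_pos
  · simp only [List.take_zero, List.nil_append, List.getElem?_drop] at hz_first hz_last
    rw [show 0 + t + 0 = t by omega] at hz_first
    rw [show 0 + t + (t - 1) = 2 * t - 1 by omega] at hz_last
    exact h_mark (hz_first.trans hz_last.symm)
  · rw [List.getElem?_append_left (by rw [List.length_take]; omega),
      List.getElem?_take_of_lt hi_pos] at hz_first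
    exact h_first hz_first

end BurstDeletion

section Segments

/-- The constraints on the symbols of a segment of class `c`, i.e. the defining conditions of
`S^(c)` other than the one on the syndrome; position `k` of the paper is index `k - 1` here. -/
def markedWords {α : Type*} (b t : ℕ) (c : α) : Set (List α) :=
  {s | s.length = b ∧ s[0]? = some c ∧ s[t]? ≠ s[2 * t - 1]? ∧ s[b - t]? = s[b - 1]?}

/-- The set `S^(c)` of segments of class `c`, for the choice `σ` of syndrome values. -/
def codeSegments {α F : Type*} (b t : ℕ) (f : List α → F) (σ : α → F) (c : α) : Set (List α) :=
  {s | s.length = b ∧ f s = σ c ∧ s[0]? = some c ∧ s[t]? ≠ s[2 * t - 1]? ∧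
    s[b - t]? = s[b - 1]?}

lemma codeSegments_eq_inter_preimage {α F : Type*} (b t : ℕ) (f : List α → F) (σ : α → F) (c : α) :
    codeSegments b t f σ c = markedWords b t c ∩ f ⁻¹' {σ c} := by
  ext s
  simp only [codeSegments, markedWords, Set.mem_ofPred_eq, Set.mem_inter_iff, Set.mem_preimage,
    Set.mem_singleton_iff]
  tauto

variable {q b t : ℕ} {F : Type*} {f : List (Fin q) → F} {σ : Fin q → F} {c d : Fin q}
  {u v z z' r r' : List (Fin q)}

lemma append_ne_append_of_mem_burstDelBall (hf : IsSyndrome b t f) (ht : 0 < t)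
    (hu : u ∈ codeSegments b t f σ c) (hv : v ∈ codeSegments b t f σ c)
    (hz : z ∈ burstDelBall t v) (hr' : ∀ d, v.getLast? = some d → ¬ IsBracketed t d r') :
    u ++ r ≠ z ++ r' := by
  intro h
  obtain ⟨hu_len, hu_f, -, -, -⟩ := hu
  obtain ⟨hv_len, hv_f, -, -, hv_last⟩ := hv
  have hz_len := length_add_of_mem_burstDelBall hz
  obtain ⟨w, rfl⟩ : z <+: u :=
    List.prefix_of_prefix_length_le ⟨r', h.symm⟩ (List.prefix_append u r) (by omega)
  rw [List.length_append] at hu_len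
  have hw_len : w.length = t := by omega
  obtain rfl : z ++ w = v :=
    hf.eq_of_mem_burstDelBall (by rwa [List.length_append]) hv_len (hu_f.trans hv_f.symm)
      (hw_len ▸ mem_burstDelBall_append z w) hz
  have hr'_eq : w ++ r = r' := List.append_cancel_left (by rwa [← List.append_assoc])
  have hw (j : ℕ) (hj : j < t) : r'[j]? = (z ++ w)[b - t + j]? := by
    rw [← hr'_eq, List.getElem?_append_left (by omega), List.getElem?_append_right (by omega)]
    congr 1
    omega
  have hv_ne : z ++ w ≠ [] := List.ne_nil_of_length_pos (by rw [List.length_append]; omega)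
  have hd := List.getLast?_eq_some_getLast hv_ne
  refine hr' _ hd ?_
  rw [List.getLast?_eq_getElem?, hv_len] at hd
  constructor
  · rw [hw 0 ht, Nat.add_zero, hv_last, hd]
  · rw [hw (t - 1) (by omega), ← hd]
    congr 1
    omega

lemma eq_and_eq_of_append_eq_append (hf : IsSyndrome b t f) (ht : 0 < t)
    (hu : u ∈ codeSegments b t f σ c) (hv : v ∈ codeSegments b t f σ c)
    (hz : IsReceived t z u) (hz' : IsReceived t z' v)
    (hr : ∀ d, u.getLast? = some d → ¬ IsBracketed t d r)
    (hr' : ∀ d, v.getLast? = some d → ¬ IsBracketed t d r')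
    (h : z ++ r = z' ++ r') : u = v ∧ z = z' := by
  have h_len : u.length = v.length := hu.1.trans hv.1.symm
  rcases hz with rfl | hz <;> rcases hz' with rfl | hz'
  · exact ⟨List.append_inj_left h h_len, List.append_inj_left h h_len⟩
  · exact (append_ne_append_of_mem_burstDelBall hf ht hu hv hz' hr' h).elim
  · exact (append_ne_append_of_mem_burstDelBall hf ht hv hu hz hr h.symm).elim
  · have hz_len := length_add_of_mem_burstDelBall hz
    have hz'_len := length_add_of_mem_burstDelBall hz'
    have hzz' : z = z' := List.append_inj_left h (by omega)
    refine ⟨?_, hzz'⟩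
    exact hf.eq_of_mem_burstDelBall hu.1 hv.1 (hu.2.1.trans hv.2.1.symm) hz (hzz' ▸ hz')

end Segments

section LinkedLists

variable {ι β : Type*} {S : ι → Set β} {next : β → ι} {c : ι}

/-- The first entry of the list `L` lies in `S c`, and each entry `s` is followed by an entry
in `S (next s)`. -/
def IsLinked (S : ι → Set β) (next : β → ι) (c : ι) (L : List β) : Prop :=
  (∀ s ∈ L.head?, s ∈ S c) ∧ L.IsChain fun s s' => s' ∈ S (next s)

@[simp]
lemma isLinked_nil : IsLinked S next c [] := by
  simp [IsLinked]

@[simp]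
lemma isLinked_cons {s : β} {L : List β} :
    IsLinked S next c (s :: L) ↔ s ∈ S c ∧ IsLinked S next (next s) L := by
  simp [IsLinked, List.isChain_cons]

lemma IsLinked.exists_mem {L : List β} (hL : IsLinked S next c L) {s : β} (hs : s ∈ L) :
    ∃ c', s ∈ S c' := by
  induction L generalizing c with
  | nil => simp at hs
  | cons u L ih =>
    rw [isLinked_cons] at hL
    rcases List.mem_cons.1 hs with rfl | hs
    · exact ⟨c, hL.1⟩
    · exact ih hL.2 hs

lemma setOf_isLinked_length_succ {n : ℕ} {c : ι} (hc : (S c).Finite)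
    (hn : ∀ c', {L | L.length = n ∧ IsLinked S next c' L}.Finite) :
    {L | L.length = n + 1 ∧ IsLinked S next c L} =
      (fun p : (_ : β) × List β => p.1 :: p.2) ''
        (hc.toFinset.sigma fun s => (hn (next s)).toFinset : Finset ((_ : β) × List β)) := by
  ext L
  cases L with
  | nil => simp
  | cons s L => simp [Set.mem_image, and_left_comm]

lemma finite_setOf_isLinked (hS : ∀ c, (S c).Finite) (n : ℕ) (c : ι) :
    {L | L.length = n ∧ IsLinked S next c L}.Finite := by
  induction n generalizing c with
  | zero => exact (Set.finite_singleton []).subset fun L hL => List.length_eq_zero_iff.1 hL.1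
  | succ n ih =>
    rw [setOf_isLinked_length_succ (hS c) ih]
    exact (Finset.finite_toSet _).image _

lemma pow_le_ncard_setOf_isLinked (hS : ∀ c, (S c).Finite) {M : ℝ} (hM : 0 ≤ M)
    (hSM : ∀ c, M ≤ (S c).ncard) (n : ℕ) (c : ι) :
    M ^ n ≤ {L | L.length = n ∧ IsLinked S next c L}.ncard := by
  induction n generalizing c with
  | zero =>
    have : {L | L.length = 0 ∧ IsLinked S next c L} = {[]} := by
      ext L
      simp +contextual [List.length_eq_zero_iff]
    rw [this, Set.ncard_singleton, pow_zero, Nat.cast_one]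
  | succ n ih =>
    have h_fin := finite_setOf_isLinked (next := next) hS n
    have cons_injective : Injective fun p : (_ : β) × List β => p.1 :: p.2 := by
      rintro ⟨s, L⟩ ⟨s', L'⟩ h
      obtain ⟨rfl, rfl⟩ := List.cons.inj h
      rfl
    rw [setOf_isLinked_length_succ (hS c) h_fin, Set.ncard_image_of_injective _ cons_injective,
      Set.ncard_coe_finset, card_sigma, Nat.cast_sum]
    calc M ^ (n + 1) = M * M ^ n := pow_succ' M n
      _ ≤ (S c).ncard * M ^ n := by gcongr; exact hSM c
      _ = ∑ _s ∈ (hS c).toFinset, M ^ n := by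
        rw [sum_const, nsmul_eq_mul, Set.ncard_eq_toFinset_card _ (hS c)]
      _ ≤ ∑ s ∈ (hS c).toFinset, (#(h_fin (next s)).toFinset : ℝ) := by
        gcongr with s
        rw [← Set.ncard_eq_toFinset_card _ (h_fin (next s))]
        exact ih (next s)

end LinkedLists

section UniqueDecoding

variable {q b t : ℕ} {F : Type*} {f : List (Fin q) → F} {σ : Fin q → F}
  {next : List (Fin q) → Fin q} {c d : Fin q} {L L' Z Z' : List (List (Fin q))}

lemma not_isBracketed_flatten (ht : 0 < t) (h2t : 2 * t ≤ b)
    (hL : IsLinked (codeSegments b t f σ) next c L) (hcd : c ≠ d)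
    (hZ : List.Forall₂ (IsReceived t) Z L) : ¬ IsBracketed t d Z.flatten := by
  cases hZ with
  | nil => simp [IsBracketed]
  | @cons z s Z L hz hZ =>
    obtain ⟨⟨hs_len, -, hs_first, hs_mark, -⟩, -⟩ := isLinked_cons.1 hL
    have hz_len := hz.length_le
    have hs_ne : s[0]? ≠ some d := by rwa [hs_first, Ne, Option.some_inj]
    have hz_not := hz.not_isBracketed ht hs_ne hs_mark
    rwa [IsBracketed, List.flatten_cons, List.getElem?_append_left (by omega),
      List.getElem?_append_left (by omega)]

lemma IsLinked.eq_of_flatten_eq (hf : IsSyndrome b t f) (ht : 0 < t) (h2t : 2 * t ≤ b)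
    (h_next : ∀ s, s.getLast? ≠ some (next s))
    (hL : IsLinked (codeSegments b t f σ) next c L)
    (hL' : IsLinked (codeSegments b t f σ) next c L')
    (hZ : List.Forall₂ (IsReceived t) Z L) (hZ' : List.Forall₂ (IsReceived t) Z' L')
    (h : Z.flatten = Z'.flatten) : L = L' := by
  have received_ne_nil {c z s} (hs : s ∈ codeSegments b t f σ c) (hz : IsReceived t z s) :
      z ≠ [] := by
    have hz_len := hz.length_le
    have hs_len : s.length = b := hs.1
    exact List.ne_nil_of_length_pos (by omega)
  have guard {s L Z} (hL : IsLinked (codeSegments b t f σ) next (next s) L)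
      (hZ : List.Forall₂ (IsReceived t) Z L) (d : Fin q) (hd : s.getLast? = some d) :
      ¬ IsBracketed t d Z.flatten :=
    not_isBracketed_flatten ht h2t hL (fun h => h_next s (h ▸ hd)) hZ
  induction hZ generalizing c L' Z' with
  | nil =>
    cases hZ' with
    | nil => rfl
    | cons hz' _ =>
      exact (received_ne_nil (isLinked_cons.1 hL').1 hz' (List.append_eq_nil_iff.1 h.symm).1).elim
  | cons hz hZ ih =>
    obtain ⟨hu, hL⟩ := isLinked_cons.1 hL
    cases hZ' with
    | nil => exact (received_ne_nil hu hz (List.append_eq_nil_iff.1 h).1).elim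
    | cons hz' hZ' =>
      obtain ⟨hv, hL'⟩ := isLinked_cons.1 hL'
      obtain ⟨rfl, rfl⟩ :=
        eq_and_eq_of_append_eq_append hf ht hu hv hz hz' (guard hL hZ) (guard hL' hZ') h
      rw [ih hL hL' hZ' (List.append_cancel_left h)]

lemma seg_flatten (hL : ∀ s ∈ L, s.length = b) {i : ℕ} (hi : i < L.length) :
    seg b L.flatten i = L[i] := by
  have h_map : L.map List.length = List.replicate L.length b :=
    List.map_eq_replicate_iff.2 hL
  have h_slice := List.drop_take_succ_flatten_eq_getElem L i hi
  rw [h_map, List.take_replicate, List.take_replicate, List.sum_replicate, List.sum_replicate,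
    List.drop_take, min_eq_left hi, min_eq_left hi.le] at h_slice
  rw [← h_slice, seg, smul_eq_mul, smul_eq_mul, ← Nat.sub_mul, Nat.add_sub_cancel_left, one_mul]

lemma exists_forall₂_isReceived (hL : ∀ s ∈ L, s.length = b) {y : List (Fin q)}
    (hy : y ∈ segBall b t L.length L.flatten) :
    ∃ Z, List.Forall₂ (IsReceived t) Z L ∧ y = Z.flatten := by
  obtain ⟨z, hz, rfl⟩ := hy
  refine ⟨List.ofFn z, List.forall₂_iff_get.2 ⟨List.length_ofFn, fun i _ hi => ?_⟩, rfl⟩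
  have hzi := hz ⟨i, hi⟩
  rw [seg_flatten hL hi] at hzi
  simpa [IsReceived] using hzi

lemma IsLinked.length_eq (hL : IsLinked (codeSegments b t f σ) next c L) {s : List (Fin q)}
    (hs : s ∈ L) : s.length = b :=
  (hL.exists_mem hs).elim fun _ hs => hs.1

lemma pairwiseDisjoint_segBall_image_flatten (hf : IsSyndrome b t f) (ht : 0 < t)
    (h2t : 2 * t ≤ b) (h_next : ∀ s, s.getLast? ≠ some (next s)) (n : ℕ) (c : Fin q) :
    (List.flatten ''
      {L | L.length = n ∧ IsLinked (codeSegments b t f σ) next c L}).PairwiseDisjoint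
      (segBall b t n) := by
  rintro _ ⟨L, ⟨rfl, hL⟩, rfl⟩ _ ⟨L', ⟨hL'_len, hL'⟩, rfl⟩ hne
  refine Set.disjoint_left.2 fun y hy hy' => hne ?_
  rw [← hL'_len] at hy'
  obtain ⟨Z, hZ, rfl⟩ := exists_forall₂_isReceived (fun _ => hL.length_eq) hy
  obtain ⟨Z', hZ', h⟩ := exists_forall₂_isReceived (fun _ => hL'.length_eq) hy'
  rw [hL.eq_of_flatten_eq hf ht h2t h_next hL' hZ hZ' h]

lemma injOn_flatten_setOf_isLinked (hf : IsSyndrome b t f) (ht : 0 < t) (h2t : 2 * t ≤ b)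
    (h_next : ∀ s, s.getLast? ≠ some (next s)) (c : Fin q) :
    Set.InjOn List.flatten {L | IsLinked (codeSegments b t f σ) next c L} := by
  have forall₂_refl (L : List (List (Fin q))) : List.Forall₂ (IsReceived t) L L :=
    List.forall₂_same.2 fun _ _ => Or.inl rfl
  exact fun L hL L' hL' h =>
    hL.eq_of_flatten_eq hf ht h2t h_next hL' (forall₂_refl L) (forall₂_refl L') h

end UniqueDecoding

section Counting

lemma card_mul_card_filter_mem_coord {ι α : Type*} [Fintype ι] [DecidableEq ι] [Fintype α]
    [DecidableEq α] (k : ι) (p : (ι → α) → Prop) [DecidablePred p] (A : (ι → α) → Finset α) {m : ℕ}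
    (hp : ∀ g a, p (update g k a) ↔ p g) (hA : ∀ g a, A (update g k a) = A g)
    (hm : ∀ g, #(A g) = m) :
    Fintype.card α * #{g | p g ∧ g k ∈ A g} = m * #{g | p g} := by
  calc Fintype.card α * #{g | p g ∧ g k ∈ A g}
      = #(({g | p g ∧ g k ∈ A g} : Finset (ι → α)).sigma fun _ => (univ : Finset α)) := by
        simp [card_sigma, mul_comm]
    _ = #(({g | p g} : Finset (ι → α)).sigma A) :=
        -- Exchange the `k`-th coordinate of `g` with the extra symbol.
        card_nbij' (fun x => ⟨update x.1 k x.2, x.1 k⟩) (fun x => ⟨update x.1 k x.2, x.1 k⟩)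
          (by simp +contextual [Set.MapsTo, hp, hA]) (by simp +contextual [Set.MapsTo, hp, hA])
          (fun _ _ => by simp) (fun _ _ => by simp)
    _ = m * #{g | p g} := by simp [card_sigma, hm, mul_comm]

lemma card_pow_three_mul_card_filter {ι α : Type*} [Fintype ι] [DecidableEq ι] [Fintype α]
    [DecidableEq α] {i₀ i j k l : ι} (h₀k : i₀ ≠ k) (hkl : k ≠ l) (h₀i : i₀ ≠ i) (hki : k ≠ i)
    (hli : l ≠ i) (hij : i ≠ j) (c : α) :
    Fintype.card α ^ 3 * #{g : ι → α | (g i₀ = c ∧ g k = g l) ∧ g i ≠ g j} =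
      (Fintype.card α - 1) * Fintype.card α ^ Fintype.card ι := by
  have count_first :
      Fintype.card α * #{g : ι → α | g i₀ = c} = Fintype.card α ^ Fintype.card ι := by
    simpa using card_mul_card_filter_mem_coord i₀ (fun _ : ι → α => True) (fun _ => {c})
      (by simp) (by simp) (fun _ => card_singleton c)
  have count_eq : Fintype.card α * #{g : ι → α | g i₀ = c ∧ g k = g l} =
      #{g : ι → α | g i₀ = c} := by
    simpa using card_mul_card_filter_mem_coord k (fun g : ι → α => g i₀ = c) (fun g => {g l})
      (by simp [h₀k]) (by simp [hkl.symm]) (fun g => card_singleton (g l))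
  have count_ne : Fintype.card α * #{g : ι → α | (g i₀ = c ∧ g k = g l) ∧ g i ≠ g j} =
      (Fintype.card α - 1) * #{g : ι → α | g i₀ = c ∧ g k = g l} := by
    simpa using card_mul_card_filter_mem_coord i (fun g : ι → α => g i₀ = c ∧ g k = g l)
      (fun g => {g j}ᶜ) (by simp [h₀i, hki, hli]) (by simp [hij.symm])
      (fun g => by rw [card_compl, card_singleton])
  rw [← count_first, ← count_eq, mul_left_comm (_ - 1), mul_left_comm (_ - 1), ← count_ne]
  ring

variable {α : Type*} {b t : ℕ}

lemma finite_markedWords [Finite α] (b t : ℕ) (c : α) : (markedWords b t c).Finite :=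
  (List.finite_length_eq α b).subset fun _ hs => hs.1

lemma ofFn_mem_markedWords (ht : 0 < t) (h2t : 2 * t < b) {c : α} {g : Fin b → α} :
    List.ofFn g ∈ markedWords b t c ↔
      (g ⟨0, by omega⟩ = c ∧ g ⟨b - t, by omega⟩ = g ⟨b - 1, by omega⟩) ∧
        g ⟨t, by omega⟩ ≠ g ⟨2 * t - 1, by omega⟩ := by
  simp [markedWords, show 0 < b by omega, show t < b by omega, show 2 * t - 1 < b by omega, ht]
  tauto

lemma image_ofFn_eq_markedWords (b t : ℕ) (c : α) :
    List.ofFn '' {g : Fin b → α | List.ofFn g ∈ markedWords b t c} = markedWords b t c := by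
  refine Set.image_preimage_eq_of_subset fun s hs => ?_
  obtain rfl : s.length = b := hs.1
  exact ⟨s.get, List.ofFn_get s⟩

lemma ncard_markedWords [Fintype α] (ht : 2 ≤ t) (h2t : 2 * t < b) (c : α) :
    (markedWords b t c).ncard = (Fintype.card α - 1) * Fintype.card α ^ (b - 3) := by
  classical
  have h_pos : 0 < Fintype.card α ^ 3 := pow_pos (Fintype.card_pos_iff.2 ⟨c⟩) 3
  have h_pow : Fintype.card α ^ b = Fintype.card α ^ 3 * Fintype.card α ^ (b - 3) := by
    rw [← pow_add, Nat.add_sub_cancel' (by omega)]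
  refine Nat.eq_of_mul_eq_mul_left h_pos ?_
  rw [← image_ofFn_eq_markedWords, Set.ncard_image_of_injective _ List.ofFn_injective]
  simp_rw [ofFn_mem_markedWords (zero_lt_two.trans_le ht) h2t]
  rw [← Finset.coe_filter_univ, Set.ncard_coe_finset, card_pow_three_mul_card_filter,
    Fintype.card_fin, h_pow]
  · ring
  all_goals
    rw [Ne, Fin.mk.injEq]
    omega

lemma exists_ncard_div_le_ncard_inter_preimage {β F : Type*} [Fintype F] [Nonempty F]
    {X : Set β} (hX : X.Finite) (f : β → F) :
    ∃ y, (X.ncard : ℝ) / Fintype.card F ≤ (X ∩ f ⁻¹' {y}).ncard := by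
  classical
  have hF : (Fintype.card F : ℝ) ≠ 0 := Nat.cast_ne_zero.2 Fintype.card_ne_zero
  obtain ⟨y, -, hy⟩ := exists_le_card_fiber_of_nsmul_le_card_of_maps_to
    (s := hX.toFinset) (t := univ) (f := f) (b := (X.ncard : ℝ) / Fintype.card F)
    (fun _ _ => mem_univ _) univ_nonempty
    (by rw [nsmul_eq_mul, card_univ, mul_div_cancel₀ _ hF, Set.ncard_eq_toFinset_card X hX])
  refine ⟨y, hy.trans_eq ?_⟩
  rw [← Set.ncard_coe_finset]
  congr 2
  ext
  simp

end Counting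

section SegmentedCode

variable {α : Type*} {S : α → Set (List α)} {τ : α → α} {c : α}

/-- The code of all concatenations `z_1 ⋯ z_γ` with `z_1 ∈ S c` and `z_i ∈ S (τ d)` whenever
`z_{i-1}` ends in `d`. The paper's code is the binary one with `τ d = 1 - d` and `c = 0`. -/
def segmentedCode {γ : ℕ} (hγ : 0 < γ) (S : α → Set (List α)) (τ : α → α) (c : α) :
    Set (List α) :=
  {x | ∃ z : Fin γ → List α, x = (List.ofFn z).flatten ∧ z ⟨0, hγ⟩ ∈ S c ∧
    ∀ i : Fin γ, 0 < i.val → ∀ d : α,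
      (z ⟨i.val - 1, Nat.lt_of_le_of_lt (Nat.pred_le _) i.isLt⟩).getLast? = some d →
        z i ∈ S (τ d)}

lemma isLinked_iff_getLast? {next : List α → α} (hS : ∀ c, [] ∉ S c)
    (h_next : ∀ s d, s.getLast? = some d → next s = τ d) {L : List (List α)} :
    IsLinked S next c L ↔ (∀ s ∈ L.head?, s ∈ S c) ∧
      L.IsChain fun s s' => ∀ d, s.getLast? = some d → s' ∈ S (τ d) := by
  induction L generalizing c with
  | nil => simp
  | cons s L ih =>
    have h_head : (∀ s' ∈ (s :: L).head?, s' ∈ S c) ↔ s ∈ S c := by simp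
    rw [isLinked_cons, h_head, List.isChain_cons]
    refine and_congr_right fun hs => ?_
    have hd := List.getLast?_eq_some_getLast (ne_of_mem_of_not_mem hs (hS c))
    simp only [ih, hd, h_next s _ hd, Option.some.injEq, forall_eq']

lemma segmentedCode_eq_image_flatten {γ : ℕ} (hγ : 0 < γ) {next : List α → α}
    (hS : ∀ c, [] ∉ S c) (h_next : ∀ s d, s.getLast? = some d → next s = τ d) :
    segmentedCode hγ S τ c = List.flatten '' {L | L.length = γ ∧ IsLinked S next c L} := by
  have isLinked_ofFn (z : Fin γ → List α) : IsLinked S next c (List.ofFn z) ↔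
      z ⟨0, hγ⟩ ∈ S c ∧ ∀ i : Fin γ, 0 < i.val → ∀ d : α,
        (z ⟨i.val - 1, Nat.lt_of_le_of_lt (Nat.pred_le _) i.isLt⟩).getLast? = some d →
          z i ∈ S (τ d) := by
    rw [isLinked_iff_getLast? hS h_next, List.isChain_ofFn]
    refine and_congr (by simp [List.head?_eq_getElem?, hγ]) ⟨?_, ?_⟩
    · rintro h ⟨_ | i, hi⟩ hi_pos
      · exact (lt_irrefl 0 hi_pos).elim
      · exact h i hi
    · exact fun h i hi => h ⟨i + 1, hi⟩ i.succ_pos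
  ext x
  constructor
  · rintro ⟨z, rfl, hz⟩
    exact ⟨List.ofFn z, ⟨List.length_ofFn, (isLinked_ofFn z).2 hz⟩, rfl⟩
  · rintro ⟨L, ⟨rfl, hL⟩, rfl⟩
    exact ⟨L.get, by rw [List.ofFn_get], (isLinked_ofFn _).1 (by rwa [List.ofFn_get])⟩

end SegmentedCode

lemma exists_le_ncard_codeSegments {α F : Type*} [Fintype α] [Fintype F] {b t : ℕ} (ht : 2 ≤ t)
    (h2t : 2 * t < b) (f : List α → F) :
    ∃ σ : α → F, ∀ c, (((Fintype.card α - 1) * Fintype.card α ^ (b - 3) : ℕ) : ℝ) / Fintype.card F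
      ≤ (codeSegments b t f σ c).ncard := by
  have : Nonempty F := ⟨f []⟩
  choose σ hσ using fun c : α =>
    exists_ncard_div_le_ncard_inter_preimage (finite_markedWords b t c) f
  refine ⟨σ, fun c => ?_⟩
  rw [codeSegments_eq_inter_preimage, ← ncard_markedWords ht h2t c]
  exact hσ c

theorem stmt1_general {q b t γ : ℕ} (ht : 2 ≤ t) (hγ : 0 < γ) (h2t : 2 * t < b) {F : Type*}
    [Fintype F] {f : List (Fin q) → F} (hf : IsSyndrome b t f) {τ : Fin q → Fin q}
    (hτ : ∀ d, τ d ≠ d) (c : Fin q) :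
    ∃ σ : Fin q → F,
      (segmentedCode hγ (codeSegments b t f σ) τ c).PairwiseDisjoint (segBall b t γ) ∧
      ((((q - 1) * q ^ (b - 3) : ℕ) : ℝ) / Fintype.card F) ^ γ ≤
        (segmentedCode hγ (codeSegments b t f σ) τ c).ncard := by
  obtain ⟨σ, hσ⟩ := exists_le_ncard_codeSegments ht h2t f
  rw [Fintype.card_fin] at hσ
  have ht_pos : 0 < t := by omega
  have hS_nil (c : Fin q) : [] ∉ codeSegments b t f σ c := fun h => by
    have : 0 = b := h.1
    omega
  have hS_fin (c : Fin q) : (codeSegments b t f σ c).Finite :=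
    (List.finite_length_eq (Fin q) b).subset fun _ hs => hs.1
  let next (s : List (Fin q)) : Fin q := τ (s.getLastD c)
  have h_next (s d) (hd : s.getLast? = some d) : next s = τ d := by
    simp only [next, List.getLastD_eq_getLast?, hd, Option.getD_some]
  have h_next_ne (s) : s.getLast? ≠ some (next s) := fun h => hτ _ (h_next s _ h).symm
  have h_inj := injOn_flatten_setOf_isLinked (σ := σ) hf ht_pos h2t.le h_next_ne c
  refine ⟨σ, ?_⟩
  rw [segmentedCode_eq_image_flatten hγ hS_nil h_next]
  refine ⟨pairwiseDisjoint_segBall_image_flatten hf ht_pos h2t.le h_next_ne γ c, ?_⟩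
  rw [(h_inj.mono fun _ hL => hL.2).ncard_image]
  exact pow_le_ncard_setOf_isLinked hS_fin (by positivity) hσ γ c

/-- there is a choice of syndrome values `σ_0, σ_1` for which the
binary segmented code is a segmented burst-of-`t`-deletions ECC of size at least
`(2^(b-3)/|F|)^γ`. -/
theorem stmt1 (b t γ : ℕ) (ht : 2 ≤ t) (hγ : 0 < γ) (h3t : 3 * t ≤ b)
    (F : Type*) [Fintype F] [Nonempty F]
    (f : List (Fin 2) → F) (hf : IsSyndrome b t f) :
    ∃ σ : Fin 2 → F,
    ∀ S : Fin 2 → Set (List (Fin 2)),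
      S = (fun c => {s | s.length = b ∧ f s = σ c ∧ s[0]? = some c ∧
          s[t]? ≠ s[2 * t - 1]? ∧ s[b - t]? = s[b - 1]?}) →
    ∀ C : Set (List (Fin 2)),
      C = {x | ∃ z : Fin γ → List (Fin 2),
          x = (List.ofFn z).flatten ∧
          z ⟨0, hγ⟩ ∈ S 0 ∧
          ∀ i : Fin γ, 0 < i.val → ∀ c : Fin 2,
            (z ⟨i.val - 1, Nat.lt_of_le_of_lt (Nat.pred_le _) i.isLt⟩).getLast?
              = some c →
            z i ∈ S (1 - c)} →
      (∀ x ∈ C, ∀ x' ∈ C, x ≠ x' →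
        segBall b t γ x ∩ segBall b t γ x' = ∅) ∧
      ((2 : ℝ) ^ (b - 3) / Fintype.card F) ^ γ ≤ (C.ncard : ℝ) := by
  obtain ⟨σ, h_disj, h_card⟩ := stmt1_general ht hγ (by omega) hf (τ := (1 - ·)) (by decide) 0
  refine ⟨σ, ?_⟩
  rintro _ rfl _ rfl
  simp only [Nat.add_one_sub_one, one_mul, Nat.cast_pow, Nat.cast_ofNat] at h_card
  exact ⟨fun _ hx _ hx' hne => (h_disj hx hx' hne).inter_eq, h_card⟩
end

section
/- Let q > 2 and let b, t, γ be positive integers with t ≥ 2 and 3t ≤ b. Let F be a nonempty finite set and let f : Σ_q^b → F be a one-burst-t-deletion syndrome function. Then there exist σ_0, σ_1, …, σ_{q−1} ∈ F such that the code C ⊆ Σ_q^{bγ} consisting of all concatenations x_1 x_2 ⋯ x_γ with x_1 ∈ S^(0) and, for i ∈ [2,γ], x_i ∈ S^(j) where j is the last symbol of x_{i−1} (here S^(j) = {s ∈ Σ_q^b : f(s) = σ_j, s_1 ≠ j, s_{t+1} ≠ j, s_{2t} ≠ j, s_{b−t+1} = s_b}), is a segmented burst-of-t-deletions error-correcting code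 of size |C| ≥ (q^{b−4}(q−1)^3/|F|)^γ. -/
/-!
A received word is decoded segment by segment. Whether the first segment `s` arrives intact or
after a burst, the first `b - t` received symbols lie in `B_t^D(s)`, so the syndrome determines `s`.
It remains to see whether a burst occurred, i.e. where the next segment starts. What is received
from a segment `u` following the symbol `j = s_b` begins with `u_1` or `u_{t+1}`, neither of which
is `j`. Position `b - t + 1` of the received word therefore holds `s_{b-t+1} = s_b` if `s` arrived
intact, and does not hold the symbol `s_b` otherwise.

For the size, a word of length `b - 1` that avoids `j` at the three positions `1, t+1, 2t` extends
by a copy of its symbol at position `b - t + 1` to a word satisfying all constraints, and by the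
pigeonhole principle some syndrome value is taken on at least a fraction `1/|F|` of these words.
-/

/-! ### Burst deletions in one segment -/

section BurstDeletion

variable {q t : ℕ} {s w : List (Fin q)}

theorem length_of_mem_burstDelBall (hw : w ∈ burstDelBall t s) : w.length = s.length - t := by
  obtain ⟨i, hi, rfl⟩ := hw
  simp only [List.length_append, List.length_take, List.length_drop]
  omega

theorem take_append_mem_burstDelBall (ht : t ≤ s.length)
    (hw : w ∈ insert s (burstDelBall t s)) (v : List (Fin q)) :
    (w ++ v).take (s.length - t) ∈ burstDelBall t s := by
  rcases hw with rfl | hw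
  · refine ⟨w.length - t, by omega, ?_⟩
    rw [List.take_append_of_le_length (by omega), Nat.sub_add_cancel ht, List.drop_length,
      List.append_nil]
  · rwa [List.take_left' (length_of_mem_burstDelBall hw)]

theorem IsSyndrome.pairwiseDisjoint {F : Type*} {b : ℕ} {f : List (Fin q) → F}
    (hf : IsSyndrome b t f) (c : F) :
    {s | s.length = b ∧ f s = c}.PairwiseDisjoint (burstDelBall t) :=
  fun u hu v hv huv =>
    Set.disjoint_iff_inter_eq_empty.2 (hf u v hu.1 hv.1 huv (hu.2.trans hv.2.symm))

end BurstDeletion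

/-! ### Synchronizing segments -/

/-- The constraints on a segment `s` of length `b` preceded by the symbol `j` that let a decoder
find where the segment ends after a possible burst of `t` deletions. Positions are 0-indexed. -/
structure IsSynchronizing {α : Type*} (b t : ℕ) (j : α) (s : List α) : Prop where
  length_eq : s.length = b
  getElem?_zero_ne : s[0]? ≠ some j
  getElem?_burst_ne : s[t]? ≠ some j
  getElem?_sub_eq : s[b - t]? = s[b - 1]?

namespace IsSynchronizing

section

variable {α : Type*} {b t : ℕ} {j : α} {s : List α}

theorem ne_nil (hs : IsSynchronizing b t j s) (hb : 0 < b) : s ≠ [] :=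
  List.ne_nil_of_length_pos (hs.length_eq ▸ hb)

theorem getElem?_sub_eq_getLast? (hs : IsSynchronizing b t j s) : s[b - t]? = s.getLast? := by
  rw [hs.getElem?_sub_eq, List.getLast?_eq_getElem?, hs.length_eq]

end

variable {q b t : ℕ} {j : Fin q} {s w w' v v' : List (Fin q)}

theorem getElem?_zero_append_ne (hs : IsSynchronizing b t j s) (htb : t < b)
    (hw : w ∈ insert s (burstDelBall t s)) (v : List (Fin q)) : (w ++ v)[0]? ≠ some j := by
  have hlen := hs.length_eq
  rcases hw with rfl | ⟨i, hi, rfl⟩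
  · rw [List.getElem?_append_left (by omega)]
    exact hs.getElem?_zero_ne
  rw [List.getElem?_append_left (by simp; omega)]
  rcases Nat.eq_zero_or_pos i with rfl | hi₀
  · simpa using hs.getElem?_burst_ne
  · rw [List.getElem?_append_left (by simp; omega), List.getElem?_take_of_lt hi₀]
    exact hs.getElem?_zero_ne

theorem getElem?_zero_eq_getLast? (hs : IsSynchronizing b t j s) (ht : 0 < t) (htb : t ≤ b)
    (hw : w ∈ burstDelBall t s) (h : s ++ v' = w ++ v) : v[0]? = s.getLast? := by
  have hlen := hs.length_eq
  have hwlen : w.length = b - t := hlen ▸ length_of_mem_burstDelBall hw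
  calc v[0]? = (w ++ v)[b - t]? := by
        rw [List.getElem?_append_right hwlen.le, hwlen, Nat.sub_self]
    _ = (s ++ v')[b - t]? := by rw [h]
    _ = s[b - t]? := List.getElem?_append_left (by omega)
    _ = s.getLast? := hs.getElem?_sub_eq_getLast?

theorem append_inj (hs : IsSynchronizing b t j s) (ht : 0 < t) (htb : t ≤ b)
    (hw : w ∈ insert s (burstDelBall t s)) (hw' : w' ∈ insert s (burstDelBall t s))
    (hv : v[0]? ≠ s.getLast?) (hv' : v'[0]? ≠ s.getLast?) (h : w ++ v = w' ++ v') :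
    w = w' ∧ v = v' := by
  apply List.append_inj h
  rcases hw with rfl | hw <;> rcases hw' with rfl | hw'
  · rfl
  · exact absurd (hs.getElem?_zero_eq_getLast? ht htb hw' h) hv'
  · exact absurd (hs.getElem?_zero_eq_getLast? ht htb hw h.symm) hv
  · rw [length_of_mem_burstDelBall hw, length_of_mem_burstDelBall hw']

end IsSynchronizing

/-! ### Chained codes -/

section ChainedCode

variable {α : Type*} {S : α → Set (List α)}

/-- The words `x_1 ⋯ x_n` whose segments satisfy `x_{i+1} ∈ S j`, where `j` is the last symbol of
`x_i`, or `a` if `i = 0`; the recursion splits off the first segment. An empty segment passes on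
the symbol before it. -/
def chainedCode (S : α → Set (List α)) : ℕ → α → Set (List α)
  | 0, _ => {[]}
  | n + 1, a => ⋃ s ∈ S a, (s ++ ·) '' chainedCode S n (s.getLastD a)

theorem mem_chainedCode_succ {n : ℕ} {a : α} {x : List α} :
    x ∈ chainedCode S (n + 1) a ↔
      ∃ s ∈ S a, ∃ r ∈ chainedCode S n (s.getLastD a), s ++ r = x := by
  simp only [chainedCode, Set.mem_iUnion, Set.mem_image, exists_prop]

theorem some_getLastD {s : List α} (hs : s ≠ []) (a : α) : some (s.getLastD a) = s.getLast? := by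
  rw [List.getLastD_eq_getLast?, List.getLast?_eq_some_getLast hs, Option.getD_some]

theorem mem_chainedCode_succ_iff_exists_flatten (hS : ∀ j, ∀ s ∈ S j, s ≠ []) (n : ℕ) (a : α)
    (x : List α) :
    x ∈ chainedCode S (n + 1) a ↔ ∃ z : Fin (n + 1) → List α, x = (List.ofFn z).flatten ∧
      z 0 ∈ S a ∧ ∀ (i : Fin n) (j : α), (z i.castSucc).getLast? = some j → z i.succ ∈ S j := by
  induction n generalizing a x with
  | zero => simp [chainedCode, Fin.exists_fin_succ_pi]
  | succ n ih =>
    rw [mem_chainedCode_succ, Fin.exists_fin_succ_pi]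
    refine exists_congr fun s => ⟨?_, ?_⟩
    · rintro ⟨hs, r, hr, rfl⟩
      obtain ⟨z, rfl, hz, hchain⟩ := (ih _ _).1 hr
      refine ⟨z, by simp [List.ofFn_succ], hs, Fin.cases (fun j hj => ?_) hchain⟩
      obtain rfl : s.getLastD a = j := Option.some_inj.1 ((some_getLastD (hS a s hs) a).trans hj)
      exact hz
    · rintro ⟨z, rfl, hs, hchain⟩
      refine ⟨hs, (List.ofFn z).flatten, (ih _ _).2 ⟨z, rfl, ?_, fun i => hchain i.succ⟩, ?_⟩
      · exact hchain 0 _ (some_getLastD (hS a s hs) a).symm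
      · simp [List.ofFn_succ]

theorem chainedCode_eq_setOf_flatten (hS : ∀ j, ∀ s ∈ S j, s ≠ []) {n : ℕ} (hn : 0 < n) (a : α) :
    chainedCode S n a = {x | ∃ z : Fin n → List α, x = (List.ofFn z).flatten ∧ z ⟨0, hn⟩ ∈ S a ∧
      ∀ i : Fin n, 0 < i.val → ∀ j : α,
        (z ⟨i.val - 1, Nat.lt_of_le_of_lt (Nat.pred_le _) i.isLt⟩).getLast? = some j →
        z i ∈ S j} := by
  obtain ⟨n, rfl⟩ := Nat.exists_eq_add_one.2 hn
  ext x
  rw [mem_chainedCode_succ_iff_exists_flatten hS]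
  refine exists_congr fun z => and_congr_right' (and_congr_right' ⟨fun h => ?_, fun h i => ?_⟩)
  · exact Fin.cases (fun h₀ => absurd h₀ (lt_irrefl 0)) fun i _ => h i
  · exact h i.succ i.succ_pos

end ChainedCode

/-! ### Unique decoding -/

section UniqueDecoding

variable {q b t : ℕ}

theorem seg_append_zero {s : List (Fin q)} (hs : s.length = b) (r : List (Fin q)) :
    seg b (s ++ r) 0 = s := by
  rw [seg, Nat.zero_mul, List.drop_zero, List.take_left' hs]

theorem seg_append_succ {s : List (Fin q)} (hs : s.length = b) (r : List (Fin q)) (i : ℕ) :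
    seg b (s ++ r) (i + 1) = seg b r i := by
  rw [seg, seg, Nat.succ_mul, Nat.add_comm, ← hs, List.drop_length_add_append]

theorem segBall_zero (x : List (Fin q)) : segBall b t 0 x = {[]} := by
  ext y
  simp [segBall]

theorem segBall_succ_append {s : List (Fin q)} (hs : s.length = b) (n : ℕ) (r : List (Fin q)) :
    segBall b t (n + 1) (s ++ r) =
      Set.image2 (· ++ ·) (insert s (burstDelBall t s)) (segBall b t n r) := by
  ext y
  simp only [segBall, Set.mem_ofPred_eq, Set.mem_image2, Fin.forall_fin_succ,
    Fin.exists_fin_succ_pi, Fin.val_zero, Fin.val_succ, Fin.cons_zero, Fin.cons_succ,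
    seg_append_zero hs, seg_append_succ hs, List.ofFn_succ, List.flatten_cons, Set.mem_insert_iff]
  constructor
  · rintro ⟨w, z, ⟨hw, hz⟩, rfl⟩
    exact ⟨w, hw, _, ⟨z, hz, rfl⟩, rfl⟩
  · rintro ⟨w, hw, _, ⟨z, hz, rfl⟩, rfl⟩
    exact ⟨w, z, ⟨hw, hz⟩, rfl⟩

/-- A segmented burst-of-`t`-deletions error-correcting code with `γ` segments of length `b`. -/
def IsSegBurstCode (b t γ : ℕ) (C : Set (List (Fin q))) : Prop :=
  ∀ x ∈ C, ∀ x' ∈ C, x ≠ x' → segBall b t γ x ∩ segBall b t γ x' = ∅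

variable {S : Fin q → Set (List (Fin q))}

theorem getElem?_zero_ne_of_mem_segBall (htb : t < b)
    (hS : ∀ j, ∀ s ∈ S j, IsSynchronizing b t j s) {n : ℕ} {a : Fin q} {x y : List (Fin q)}
    (hx : x ∈ chainedCode S n a) (hy : y ∈ segBall b t n x) : y[0]? ≠ some a := by
  cases n with
  | zero =>
    obtain rfl : y = [] := by rwa [segBall_zero] at hy
    exact nofun
  | succ n =>
    obtain ⟨s, hs, r, -, rfl⟩ := mem_chainedCode_succ.1 hx
    rw [segBall_succ_append (hS a s hs).length_eq] at hy
    obtain ⟨w, hw, v, -, rfl⟩ := hy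
    exact (hS a s hs).getElem?_zero_append_ne htb hw v

theorem eq_of_mem_segBall (ht : 0 < t) (htb : t < b)
    (hS : ∀ j, ∀ s ∈ S j, IsSynchronizing b t j s)
    (hdisj : ∀ j, (S j).PairwiseDisjoint (burstDelBall t)) {n : ℕ} {a : Fin q}
    {x x' y : List (Fin q)} (hx : x ∈ chainedCode S n a) (hx' : x' ∈ chainedCode S n a)
    (hy : y ∈ segBall b t n x) (hy' : y ∈ segBall b t n x') : x = x' := by
  induction n generalizing a x x' y with
  | zero => exact Eq.trans hx hx'.symm
  | succ n ih =>
    obtain ⟨s, hs, r, hr, rfl⟩ := mem_chainedCode_succ.1 hx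
    obtain ⟨s', hs', r', hr', rfl⟩ := mem_chainedCode_succ.1 hx'
    have hlen := (hS a s hs).length_eq
    have hlen' := (hS a s' hs').length_eq
    rw [segBall_succ_append hlen] at hy
    rw [segBall_succ_append hlen'] at hy'
    obtain ⟨w, hw, v, hv, rfl⟩ := hy
    obtain ⟨w', hw', v', hv', heq : w' ++ v' = w ++ v⟩ := hy'
    obtain rfl : s = s' := by
      refine (hdisj a).elim_set hs hs' _ (take_append_mem_burstDelBall (by omega) hw v) ?_
      rw [← heq, hlen, ← hlen']
      exact take_append_mem_burstDelBall (by omega) hw' v'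
    have hlast := some_getLastD ((hS a s hs).ne_nil (by omega)) a
    obtain ⟨-, rfl⟩ := (hS a s hs).append_inj ht htb.le hw' hw
      (hlast ▸ getElem?_zero_ne_of_mem_segBall htb hS hr' hv')
      (hlast ▸ getElem?_zero_ne_of_mem_segBall htb hS hr hv) heq
    rw [ih hr hr' hv hv']

theorem isSegBurstCode_chainedCode (ht : 0 < t) (htb : t < b)
    (hS : ∀ j, ∀ s ∈ S j, IsSynchronizing b t j s)
    (hdisj : ∀ j, (S j).PairwiseDisjoint (burstDelBall t)) (n : ℕ) (a : Fin q) :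
    IsSegBurstCode b t n (chainedCode S n a) := by
  intro x hx x' hx' hne
  refine Set.eq_empty_of_forall_notMem fun y hy => hne ?_
  exact eq_of_mem_segBall ht htb hS hdisj hx hx' hy.1 hy.2

end UniqueDecoding

/-! ### Counting -/

theorem card_mul_le_ncard_biUnion_append {α : Type*} {b : ℕ} {A : Set (List α)}
    {B : List α → Set (List α)} (hA : A.Finite) (hB : ∀ s ∈ A, (B s).Finite)
    (hlen : ∀ s ∈ A, s.length = b) {m : ℝ} (hm : ∀ s ∈ A, m ≤ (B s).ncard) :
    A.ncard * m ≤ (⋃ s ∈ A, (s ++ ·) '' B s).ncard := by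
  have hdisj : A.PairwiseDisjoint fun s => (s ++ ·) '' B s := by
    intro s hs s' hs' hne
    rw [Function.onFun, Set.disjoint_left]
    rintro _ ⟨r, -, rfl⟩ ⟨r', -, heq⟩
    exact hne (List.append_inj_left heq ((hlen s' hs').trans (hlen s hs).symm)).symm
  rw [hA.ncard_biUnion (fun s hs => (hB s hs).image _) hdisj,
    finsum_mem_eq_finite_toFinset_sum _ hA, Set.ncard_eq_toFinset_card A hA, ← nsmul_eq_mul,
    Nat.cast_sum]
  refine Finset.card_nsmul_le_sum _ _ _ fun s hs => ?_
  rw [Set.ncard_image_of_injective _ (List.append_right_injective s)]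
  exact hm s (hA.mem_toFinset.1 hs)

theorem finite_chainedCode {α : Type*} {S : α → Set (List α)} (hS : ∀ j, (S j).Finite) (n : ℕ)
    (a : α) : (chainedCode S n a).Finite := by
  induction n generalizing a with
  | zero => exact Set.finite_singleton _
  | succ n ih => exact (hS a).biUnion fun s _ => (ih _).image _

theorem pow_le_ncard_chainedCode {α : Type*} {S : α → Set (List α)} {b : ℕ}
    (hfin : ∀ j, (S j).Finite) (hlen : ∀ j, ∀ s ∈ S j, s.length = b) {m : ℝ} (hm : 0 ≤ m)
    (hcard : ∀ j, m ≤ (S j).ncard) (n : ℕ) (a : α) : m ^ n ≤ (chainedCode S n a).ncard := by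
  induction n generalizing a with
  | zero => simp [chainedCode]
  | succ n ih =>
    calc m ^ (n + 1) = m * m ^ n := pow_succ' m n
      _ ≤ (S a).ncard * m ^ n := by gcongr; exact hcard a
      _ ≤ (chainedCode S (n + 1) a).ncard :=
        card_mul_le_ncard_biUnion_append (hfin a) (fun s _ => finite_chainedCode hfin n _)
          (hlen a) fun s _ => ih _

theorem ncard_setOf_forall_mem_ne {ι α : Type*} [Fintype ι] [Fintype α] (P : Finset ι) (j : α) :
    {g : ι → α | ∀ i ∈ P, g i ≠ j}.ncard =
      (Fintype.card α - 1) ^ P.card * Fintype.card α ^ (Fintype.card ι - P.card) := by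
  classical
  have hpi : {g : ι → α | ∀ i ∈ P, g i ≠ j} =
      Fintype.piFinset fun i => if i ∈ P then Finset.univ.erase j else Finset.univ := by
    ext g
    simp only [Set.mem_ofPred_eq, Finset.mem_coe, Fintype.mem_piFinset]
    refine forall_congr' fun i => ?_
    by_cases hi : i ∈ P <;> simp [hi]
  rw [hpi, Set.ncard_coe_finset, Fintype.card_piFinset]
  simp only [apply_ite Finset.card, Finset.card_erase_of_mem (Finset.mem_univ j), Finset.card_univ]
  rw [Finset.prod_ite, Finset.prod_const, Finset.prod_const, Finset.filter_mem_eq_inter,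
    Finset.univ_inter, Finset.filter_not, Finset.filter_mem_eq_inter, Finset.univ_inter,
    Finset.card_univ_sdiff]

theorem exists_div_card_le_ncard_fiber {α F : Type*} [Fintype F] [Nonempty F] {A : Set α}
    (hA : A.Finite) (f : α → F) :
    ∃ c, (A.ncard : ℝ) / Fintype.card F ≤ {s ∈ A | f s = c}.ncard := by
  classical
  have hF : (Fintype.card F : ℝ) ≠ 0 := Nat.cast_ne_zero.2 Fintype.card_ne_zero
  obtain ⟨c, -, hc⟩ := Finset.exists_le_card_fiber_of_nsmul_le_card_of_maps_to
    (s := hA.toFinset) (t := Finset.univ) (f := f) (b := (A.ncard : ℝ) / Fintype.card F)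
    (fun _ _ => Finset.mem_univ _) Finset.univ_nonempty
    (by rw [Finset.card_univ, nsmul_eq_mul, mul_div_cancel₀ _ hF, Set.ncard_eq_toFinset_card A hA])
  refine ⟨c, hc.trans_eq ?_⟩
  rw [← Set.ncard_coe_finset, Finset.coe_filter]
  simp only [Set.Finite.mem_toFinset]

/-! ### Constrained segments -/

section ConstrainedSegments

variable {α F : Type*} {b t : ℕ}

/-- The set `S^(j)` of segments that may follow the symbol `j`, with `c` for the syndrome `σ_j`. -/
def constrainedSegments (b t : ℕ) (f : List α → F) (c : F) (j : α) : Set (List α) :=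
  {s | s.length = b ∧ f s = c ∧ s[0]? ≠ some j ∧
    s[t]? ≠ some j ∧ s[2 * t - 1]? ≠ some j ∧ s[b - t]? = s[b - 1]?}

theorem constrainedSegments_eq_setOf_isSynchronizing (f : List α → F) (c : F) (j : α) :
    constrainedSegments b t f c j =
      {s ∈ {s | IsSynchronizing b t j s ∧ s[2 * t - 1]? ≠ some j} | f s = c} := by
  ext s
  constructor
  · rintro ⟨hlen, hf, h0, ht, h2t, hb⟩
    exact ⟨⟨⟨hlen, h0, ht, hb⟩, h2t⟩, hf⟩
  · rintro ⟨⟨⟨hlen, h0, ht, hb⟩, h2t⟩, hf⟩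
    exact ⟨hlen, hf, h0, ht, h2t, hb⟩

theorem isSynchronizing_of_mem_constrainedSegments {f : List α → F} {c : F} {j : α} {s : List α}
    (hs : s ∈ constrainedSegments b t f c j) : IsSynchronizing b t j s :=
  ((constrainedSegments_eq_setOf_isSynchronizing f c j).subset hs).1.1

theorem finite_setOf_isSynchronizing [Finite α] (j : α) :
    {s | IsSynchronizing b t j s ∧ s[2 * t - 1]? ≠ some j}.Finite :=
  (List.finite_length_eq α b).subset fun _ hs => hs.1.length_eq

theorem finite_constrainedSegments [Finite α] (f : List α → F) (c : F) (j : α) :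
    (constrainedSegments b t f c j).Finite :=
  (List.finite_length_eq α b).subset fun _ hs => hs.1

theorem isSynchronizing_append_singleton {u : List α} {j x : α} (ht : t < u.length)
    (h0 : u[0]? ≠ some j) (h_burst : u[t]? ≠ some j) (hx : u[u.length + 1 - t]? = some x) :
    IsSynchronizing (u.length + 1) t j (u ++ [x]) where
  length_eq := List.length_append
  getElem?_zero_ne := by rwa [List.getElem?_append_left (by omega)]
  getElem?_burst_ne := by rwa [List.getElem?_append_left ht]
  getElem?_sub_eq := by
    rw [List.getElem?_append_left (List.getElem?_eq_some_iff.1 hx).1, hx, Nat.add_sub_cancel,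
      List.getElem?_concat_length]

theorem le_ncard_setOf_isSynchronizing [Fintype α] (ht : 2 ≤ t) (h3t : 3 * t ≤ b) (j : α) :
    (Fintype.card α - 1) ^ 3 * Fintype.card α ^ (b - 4) ≤
      {s | IsSynchronizing b t j s ∧ s[2 * t - 1]? ≠ some j}.ncard := by
  obtain ⟨m, rfl⟩ : ∃ m, b = m + 1 := ⟨b - 1, by omega⟩
  let P : Finset (Fin m) := {⟨0, by omega⟩, ⟨t, by omega⟩, ⟨2 * t - 1, by omega⟩}
  have hP : P.card = 3 := by
    rw [Finset.card_eq_three]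
    refine ⟨_, _, _, ?_, ?_, ?_, rfl⟩ <;> simp only [ne_eq, Fin.mk.injEq] <;> omega
  let extend (g : Fin m → α) : List α := List.ofFn g ++ [g ⟨m + 1 - t, by omega⟩]
  have extend_injective : extend.Injective := fun g g' h =>
    List.ofFn_injective (List.append_inj_left h (by simp only [List.length_ofFn]))
  have extend_mem : ∀ g ∈ {g : Fin m → α | ∀ i ∈ P, g i ≠ j},
      extend g ∈ {s | IsSynchronizing (m + 1) t j s ∧ s[2 * t - 1]? ≠ some j} := by
    intro g hg
    have ofFn_ne {i : ℕ} (hi : i < m) (hiP : ⟨i, hi⟩ ∈ P) : (List.ofFn g)[i]? ≠ some j := by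
      rw [List.getElem?_ofFn, dif_pos hi]
      exact fun h => hg _ hiP (Option.some_inj.1 h)
    have hsync : IsSynchronizing ((List.ofFn g).length + 1) t j (extend g) := by
      apply isSynchronizing_append_singleton
      · rw [List.length_ofFn]; omega
      · exact ofFn_ne (by omega) (by simp [P])
      · exact ofFn_ne (by omega) (by simp [P])
      · rw [List.length_ofFn, List.getElem?_ofFn, dif_pos (by omega)]
    refine ⟨List.length_ofFn (f := g) ▸ hsync, ?_⟩
    rw [List.getElem?_append_left (by rw [List.length_ofFn]; omega)]
    exact ofFn_ne (by omega) (by simp [P])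
  calc (Fintype.card α - 1) ^ 3 * Fintype.card α ^ (m + 1 - 4)
      = {g : Fin m → α | ∀ i ∈ P, g i ≠ j}.ncard := by
        rw [ncard_setOf_forall_mem_ne, hP, Fintype.card_fin, show m + 1 - 4 = m - 3 by omega]
    _ ≤ _ := Set.ncard_le_ncard_of_injOn extend extend_mem extend_injective.injOn
        (finite_setOf_isSynchronizing j)

theorem exists_le_ncard_constrainedSegments [Fintype α] [Fintype F] [Nonempty F] (ht : 2 ≤ t)
    (h3t : 3 * t ≤ b) (f : List α → F) (j : α) :
    ∃ c, (Fintype.card α : ℝ) ^ (b - 4) * ((Fintype.card α : ℝ) - 1) ^ 3 / Fintype.card F ≤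
      (constrainedSegments b t f c j).ncard := by
  obtain ⟨c, hc⟩ := exists_div_card_le_ncard_fiber (finite_setOf_isSynchronizing j) f
  refine ⟨c, ?_⟩
  rw [constrainedSegments_eq_setOf_isSynchronizing]
  refine le_trans ?_ hc
  gcongr
  have hα : 1 ≤ Fintype.card α := Fintype.card_pos_iff.2 ⟨j⟩
  rw [mul_comm, ← Nat.cast_pred hα]
  exact_mod_cast le_ncard_setOf_isSynchronizing ht h3t j

end ConstrainedSegments

theorem stmt3_general {q b t : ℕ} (ht : 2 ≤ t) (h3t : 3 * t ≤ b) {F : Type*} [Fintype F]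
    [Nonempty F] {f : List (Fin q) → F} (hf : IsSyndrome b t f) :
    ∃ σ : Fin q → F, ∀ (γ : ℕ) (a : Fin q),
      IsSegBurstCode b t γ (chainedCode (fun j => constrainedSegments b t f (σ j) j) γ a) ∧
      ((q : ℝ) ^ (b - 4) * ((q : ℝ) - 1) ^ 3 / Fintype.card F) ^ γ ≤
        (chainedCode (fun j => constrainedSegments b t f (σ j) j) γ a).ncard := by
  choose σ hσ using exists_le_ncard_constrainedSegments ht h3t f
  rw [Fintype.card_fin] at hσ
  refine ⟨σ, fun γ a => ⟨?_, ?_⟩⟩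
  · refine isSegBurstCode_chainedCode (by omega) (by omega)
      (fun j s => isSynchronizing_of_mem_constrainedSegments) (fun j => ?_) γ a
    exact (hf.pairwiseDisjoint (σ j)).subset fun s hs => ⟨hs.1, hs.2.1⟩
  · have hq : (1 : ℝ) ≤ q := by exact_mod_cast a.pos
    have hm : 0 ≤ (q : ℝ) ^ (b - 4) * ((q : ℝ) - 1) ^ 3 / Fintype.card F := by
      have := sub_nonneg.2 hq
      positivity
    exact pow_le_ncard_chainedCode (fun j => finite_constrainedSegments f (σ j) j)
      (fun j s hs => hs.1) hm hσ γ a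

/-- there is a choice of syndrome values `σ_0, …, σ_{q-1}` for which
the `q`-ary (`q > 2`) segmented code is a segmented burst-of-`t`-deletions ECC of
size at least `(q^(b-4)(q-1)^3/|F|)^γ`. -/
theorem stmt3 (q b t γ : ℕ) (hq : 2 < q) (ht : 2 ≤ t) (hγ : 0 < γ)
    (h3t : 3 * t ≤ b) (F : Type*) [Fintype F] [Nonempty F]
    (f : List (Fin q) → F) (hf : IsSyndrome b t f) :
    ∃ σ : Fin q → F,
    ∀ S : Fin q → Set (List (Fin q)),
      S = (fun j => {s | s.length = b ∧ f s = σ j ∧ s[0]? ≠ some j ∧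
          s[t]? ≠ some j ∧ s[2 * t - 1]? ≠ some j ∧ s[b - t]? = s[b - 1]?}) →
    ∀ C : Set (List (Fin q)),
      C = {x | ∃ z : Fin γ → List (Fin q),
          x = (List.ofFn z).flatten ∧
          z ⟨0, hγ⟩ ∈ S ⟨0, by omega⟩ ∧
          ∀ i : Fin γ, 0 < i.val → ∀ j : Fin q,
            (z ⟨i.val - 1, Nat.lt_of_le_of_lt (Nat.pred_le _) i.isLt⟩).getLast?
              = some j →
            z i ∈ S j} →
      (∀ x ∈ C, ∀ x' ∈ C, x ≠ x' →
        segBall b t γ x ∩ segBall b t γ x' = ∅) ∧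
      ((q : ℝ) ^ (b - 4) * ((q : ℝ) - 1) ^ 3 / Fintype.card F) ^ γ
        ≤ (C.ncard : ℝ) := by
  obtain ⟨σ, hσ⟩ := stmt3_general ht h3t hf
  have hne : ∀ j, ∀ s ∈ constrainedSegments b t f (σ j) j, s ≠ [] := fun j s hs =>
    (isSynchronizing_of_mem_constrainedSegments hs).ne_nil (by omega)
  exact ⟨σ, by rintro S rfl C rfl; exact chainedCode_eq_setOf_flatten hne hγ _ ▸ hσ γ _⟩
end

section
/- Let q ≥ 2 and let b, t, γ be positive integers with t ≥ 2 and 2t < b. Then for every x ∈ Σ_q^{bγ}, the number of sequences x′ ∈ Σ_q^{bγ} with x′ ≠ x and B^D_{γ,t}(x′) ∩ B^D_{γ,t}(x) ≠ ∅ is at most b^{2γ} · q^{γt}. -/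
/-!
Count the pairs `(y, x')` with `y ∈ segBall b t γ x ∩ segBall b t γ x'`. A segment of length at
most `b` has at most `b + 1 - t` bursts to delete, so with the option of deleting nothing there are
at most `(b + 1 - t + 1) ^ γ` words `y` in the ball of `x`. Conversely, `x'` can be rebuilt from `y`
once we know, for each segment, whether a burst was deleted and if so its position and its content:
this record fixes the length of each piece of `y`, hence the way `y` splits into pieces, and each
piece then gives back its segment. Thus each `y` lies in the balls of at most
`((b + 1 - t) * q ^ t + 1) ^ γ` words `x'`. For `2 ≤ t ≤ b` and `0 < q` the two factors are at
most `b ^ γ` and `(b * q ^ t) ^ γ`.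
-/

section Segments

variable {q : ℕ}

lemma length_seg_le (b : ℕ) (x : List (Fin q)) (i : ℕ) : (seg b x i).length ≤ b :=
  List.length_take_le _ _

lemma length_seg {b γ : ℕ} {x : List (Fin q)} (hx : x.length = b * γ) (i : Fin γ) :
    (seg b x i).length = b := by
  have hi : (i + 1) * b ≤ b * γ := mul_comm b γ ▸ Nat.mul_le_mul_right b i.is_lt
  rw [add_one_mul] at hi
  simp only [seg, List.length_take, List.length_drop, hx]
  omega

lemma flatten_ofFn_seg (b γ : ℕ) (x : List (Fin q)) :
    (List.ofFn fun i : Fin γ => seg b x i).flatten = x.take (b * γ) := by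
  induction γ with
  | zero => simp
  | succ γ ih =>
    simp only [List.ofFn_succ_last, List.flatten_append, Fin.val_castSucc, ih, Fin.val_last,
      List.flatten_singleton, mul_add_one, List.take_add]
    rw [seg, mul_comm γ b]

lemma eq_of_forall_seg_eq {b γ : ℕ} {x y : List (Fin q)} (hx : x.length = b * γ)
    (hy : y.length = b * γ) (h : ∀ i : Fin γ, seg b x i = seg b y i) : x = y := by
  rw [← List.take_of_length_le hx.le, ← List.take_of_length_le hy.le, ← flatten_ofFn_seg,
    ← flatten_ofFn_seg, funext h]

end Segments

section BallSize

variable {q : ℕ}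

lemma burstDelBall_eq_image (t : ℕ) (u : List (Fin q)) :
    burstDelBall t u = (fun i => u.take i ++ u.drop (i + t)) '' Set.Iio (u.length + 1 - t) := by
  ext y
  simp only [burstDelBall, Set.mem_ofPred_eq, Set.mem_image, Set.mem_Iio, eq_comm (a := y)]
  exact exists_congr fun i => and_congr_left' (by omega)

lemma finite_burstDelBall (t : ℕ) (u : List (Fin q)) : (burstDelBall t u).Finite :=
  burstDelBall_eq_image t u ▸ (Set.finite_Iio _).image _

lemma ncard_burstDelBall_le (t : ℕ) (u : List (Fin q)) :
    (burstDelBall t u).ncard ≤ u.length + 1 - t := by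
  rw [burstDelBall_eq_image]
  exact (Set.ncard_image_le (Set.finite_Iio _)).trans (by simp)

lemma segBall_eq_image (b t γ : ℕ) (x : List (Fin q)) :
    segBall b t γ x = (fun z => (List.ofFn z).flatten) ''
      Set.univ.pi fun i : Fin γ => insert (seg b x i) (burstDelBall t (seg b x i)) := by
  ext y
  simp [segBall, eq_comm]

lemma finite_pi_insert_burstDelBall (t : ℕ) {ι : Type*} [Finite ι] (u : ι → List (Fin q)) :
    (Set.univ.pi fun i => insert (u i) (burstDelBall t (u i))).Finite :=
  Set.Finite.pi fun i => (finite_burstDelBall t (u i)).insert (u i)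

lemma finite_segBall (b t γ : ℕ) (x : List (Fin q)) : (segBall b t γ x).Finite :=
  segBall_eq_image b t γ x ▸ (finite_pi_insert_burstDelBall t _).image _

lemma ncard_univ_pi {ι : Type*} [Fintype ι] {α : ι → Type*} (s : ∀ i, Set (α i)) :
    (Set.univ.pi s).ncard = ∏ i, (s i).ncard := by
  simp only [← Nat.card_coe_set_eq, Nat.card_congr (Equiv.Set.univPi s), Nat.card_pi]

lemma ncard_segBall_le (b t γ : ℕ) (x : List (Fin q)) :
    (segBall b t γ x).ncard ≤ (b + 1 - t + 1) ^ γ := by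
  have piece_le (i : Fin γ) :
      (insert (seg b x i) (burstDelBall t (seg b x i))).ncard ≤ b + 1 - t + 1 := by
    have := ncard_burstDelBall_le t (seg b x i)
    have := length_seg_le b x i
    exact (Set.ncard_insert_le _ _).trans (by omega)
  calc (segBall b t γ x).ncard
      ≤ ∏ i : Fin γ, (insert (seg b x i) (burstDelBall t (seg b x i))).ncard := by
        rw [segBall_eq_image, ← ncard_univ_pi]
        exact Set.ncard_image_le (finite_pi_insert_burstDelBall t _)
    _ ≤ (b + 1 - t + 1) ^ γ := by
        simpa using Finset.prod_le_pow_card Finset.univ _ _ fun i _ => piece_le i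

end BallSize

/-- What has to be remembered to undo the deletion of at most one burst of `t` symbols from a word
of length at most `b` over `α`: nothing (`none`) if no burst was deleted, its position and its
content otherwise. There are `b + 1 - t` positions, in particular none when `b < t`. -/
abbrev BurstRecord (α : Type*) (b t : ℕ) : Type _ :=
  Option (Fin (b + 1 - t) × List.Vector α t)

namespace BurstRecord

variable {α : Type*} {b t : ℕ}

/-- The word from which `z` results by the deletion that is recorded: put the deleted burst, if
any, back at its position. -/
def restore : BurstRecord α b t → List α → List α
  | none, z => z
  | some (i, w), z => z.take i ++ w.toList ++ z.drop i

lemma length_restore (d : BurstRecord α b t) (z : List α) :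
    (restore d z).length = z.length + if d.isSome then t else 0 := by
  rcases d with _ | ⟨i, w⟩
  · simp [restore]
  · simp only [restore, List.length_append, List.length_take, List.Vector.toList_length,
      List.length_drop, Option.isSome_some, if_true]
    omega

lemma exists_restore_eq {q : ℕ} {u z : List (Fin q)} (hu : u.length ≤ b)
    (hz : z = u ∨ z ∈ burstDelBall t u) : ∃ d : BurstRecord (Fin q) b t, restore d z = u := by
  rcases hz with rfl | ⟨i, hi, rfl⟩
  · exact ⟨none, rfl⟩
  · have burst_length : ((u.drop i).take t).length = t :=
      List.length_take_of_le (by rw [List.length_drop]; omega)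
    refine ⟨some (⟨i, by omega⟩, ⟨(u.drop i).take t, burst_length⟩), ?_⟩
    have length_take_eq : (u.take i).length = i := List.length_take_of_le (by omega)
    simp only [restore, List.take_left' length_take_eq, List.drop_left' length_take_eq,
      List.Vector.toList_mk]
    rw [← List.take_add, List.take_append_drop]

lemma eq_of_flatten_eq {γ : ℕ} (d : Fin γ → BurstRecord α b t) {z z' : Fin γ → List α}
    (hlen : ∀ i, (restore (d i) (z i)).length = (restore (d i) (z' i)).length)
    (hflat : (List.ofFn z).flatten = (List.ofFn z').flatten) : z = z' := by
  have piece_length (i : Fin γ) : (z i).length = (z' i).length := by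
    simpa only [length_restore, add_left_inj] using hlen i
  refine List.ofFn_injective (List.eq_iff_flatten_eq.2 ⟨hflat, ?_⟩)
  simp only [List.map_ofFn]
  exact congrArg List.ofFn (funext piece_length)

lemma card_eq (α : Type*) [Fintype α] (b t : ℕ) :
    Fintype.card (BurstRecord α b t) = (b + 1 - t) * Fintype.card α ^ t + 1 := by
  rw [Fintype.card_option, Fintype.card_prod, Fintype.card_fin, card_vector]

end BurstRecord

section Confusable

open BurstRecord

variable {q : ℕ}

lemma ncard_setOf_mem_segBall_le (b t γ : ℕ) (y : List (Fin q)) :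
    {x : List (Fin q) | x.length = b * γ ∧ y ∈ segBall b t γ x}.ncard
      ≤ ((b + 1 - t) * q ^ t + 1) ^ γ := by
  set S := {x : List (Fin q) | x.length = b * γ ∧ y ∈ segBall b t γ x}
  have exists_record (x : S) : ∃ (d : Fin γ → BurstRecord (Fin q) b t) (z : Fin γ → List (Fin q)),
      (∀ i, restore (d i) (z i) = seg b x i) ∧ (List.ofFn z).flatten = y := by
    obtain ⟨x, -, z, hz, rfl⟩ := x
    choose d hd using fun i : Fin γ => exists_restore_eq (length_seg_le b x i) (hz i)
    exact ⟨d, z, hd, rfl⟩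
  choose d z hseg hflat using exists_record
  have d_injective : Function.Injective d := by
    intro x x' hd
    have hz : z x = z x' := by
      refine eq_of_flatten_eq (d x) (fun i => ?_) ((hflat x).trans (hflat x').symm)
      rw [hseg, hd, hseg, length_seg x.2.1, length_seg x'.2.1]
    refine Subtype.ext (eq_of_forall_seg_eq x.2.1 x'.2.1 fun i => ?_)
    rw [← hseg, ← hseg, hd, hz]
  calc S.ncard ≤ Nat.card (Fin γ → BurstRecord (Fin q) b t) :=
        Nat.card_coe_set_eq S ▸ Nat.card_le_card_of_injective d d_injective
    _ = ((b + 1 - t) * q ^ t + 1) ^ γ := by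
        rw [Nat.card_eq_fintype_card, Fintype.card_fun, card_eq, Fintype.card_fin,
          Fintype.card_fin]

theorem stmt15_general (b t γ : ℕ) (x : List (Fin q)) :
    {x' : List (Fin q) | x'.length = b * γ ∧
      (segBall b t γ x' ∩ segBall b t γ x).Nonempty}.ncard
      ≤ (b + 1 - t + 1) ^ γ * ((b + 1 - t) * q ^ t + 1) ^ γ := by
  let fiber (y : List (Fin q)) := {x' : List (Fin q) | x'.length = b * γ ∧ y ∈ segBall b t γ x'}
  let Y := (finite_segBall b t γ x).toFinset
  have finite_fiber (y : List (Fin q)) : (fiber y).Finite :=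
    (List.finite_length_eq (Fin q) (b * γ)).subset fun _ h => h.1
  have subset_fibers : {x' : List (Fin q) | x'.length = b * γ ∧
      (segBall b t γ x' ∩ segBall b t γ x).Nonempty} ⊆ ⋃ y ∈ Y, fiber y := by
    rintro x' ⟨hx', y, hy', hy⟩
    exact Set.mem_biUnion ((finite_segBall b t γ x).mem_toFinset.2 hy) ⟨hx', hy'⟩
  calc _ ≤ (⋃ y ∈ Y, fiber y).ncard :=
        Set.ncard_le_ncard subset_fibers (Y.finite_toSet.biUnion fun y _ => finite_fiber y)
    _ ≤ ∑ y ∈ Y, (fiber y).ncard := Y.set_ncard_biUnion_le fiber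
    _ ≤ Y.card * ((b + 1 - t) * q ^ t + 1) ^ γ :=
        Finset.sum_le_card_nsmul _ _ _ fun y _ => ncard_setOf_mem_segBall_le b t γ y
    _ ≤ (b + 1 - t + 1) ^ γ * ((b + 1 - t) * q ^ t + 1) ^ γ := by
        rw [← Set.ncard_eq_toFinset_card _ (finite_segBall b t γ x)]
        exact Nat.mul_le_mul_right _ (ncard_segBall_le b t γ x)

end Confusable

lemma confusable_bound_le {q b t : ℕ} (γ : ℕ) (hq : 0 < q) (ht : 2 ≤ t) (htb : t ≤ b) :
    (b + 1 - t + 1) ^ γ * ((b + 1 - t) * q ^ t + 1) ^ γ ≤ b ^ (2 * γ) * q ^ (γ * t) := by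
  have positions_le : b + 1 - t + 1 ≤ b := by omega
  have records_le : (b + 1 - t) * q ^ t + 1 ≤ b * q ^ t :=
    calc (b + 1 - t) * q ^ t + 1 ≤ (b + 1 - t) * q ^ t + q ^ t := by
          gcongr
          exact Nat.one_le_pow _ _ hq
      _ = (b + 1 - t + 1) * q ^ t := (add_one_mul _ _).symm
      _ ≤ b * q ^ t := Nat.mul_le_mul_right _ positions_le
  calc (b + 1 - t + 1) ^ γ * ((b + 1 - t) * q ^ t + 1) ^ γ ≤ b ^ γ * (b * q ^ t) ^ γ := by gcongr
    _ = b ^ (2 * γ) * q ^ (γ * t) := by ring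

/-- the number of confusable sequences — sequences `x' ≠ x` whose
segmented burst-deletion ball intersects that of `x` — is at most
`b^(2γ) q^(γt)`. -/
theorem stmt15 (q b t γ : ℕ) (hq : 2 ≤ q) (ht : 2 ≤ t) (hγ : 0 < γ)
    (h2t : 2 * t < b) (x : List (Fin q)) (hx : x.length = b * γ) :
    {x' : List (Fin q) | x'.length = b * γ ∧ x' ≠ x ∧
      (segBall b t γ x' ∩ segBall b t γ x).Nonempty}.ncard
      ≤ b ^ (2 * γ) * q ^ (γ * t) :=
  (Set.ncard_le_ncard (fun _ h => And.intro h.1 h.2.2)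
    ((List.finite_length_eq _ _).subset fun _ h => h.1)).trans <|
    (stmt15_general b t γ x).trans (confusable_bound_le γ (by omega) ht (by omega))
end
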